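/- arXiv:2511.09417 — 2 statements merged into one kernel-verified Lean document; each statement's English description precedes it below -/
import Mathlib

section
/- Dual (witness) characterization of the weight-based measure: for every m, n ≥ 1 and every state J on ℂ^m ⊗ ℂ^n, C_w(J) = sup { 1 − Re Tr(W·J) : W is a positive semidefinite complex matrix indexed by Fin m × Fin n such that Re Tr(W·σ) ≥ 1 for every separable state σ on ℂ^m ⊗ ℂ^n }. -/
/-!
The statement is conic duality between separable states and witnesses.

Weak duality: if `J - (1 - s) σ` is positive semidefinite, pairing it with a witness `W` gives
`Tr (W J) ≥ (1 - s) Tr (W σ) ≥ 1 - s`, because the trace of a product of two positive semidefinite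
matrices is nonnegative (`re_trace_mul_nonneg`).

Strong duality (`exists_witness`): let `0 < t` and suppose that `J - t σ` is positive semidefinite
for no separable `σ`. Then `t⁻¹ J` lies outside the convex set `Sep + PSD`. This set is closed,
because the separable states form a compact set (`isCompact_setOf_sepState`): they are the convex
hull of the compact set of product states, and in finite dimension Carathéodory's theorem makes such
a hull compact (`isCompact_convexHull_of_finiteDimensional`). Hahn–Banach therefore separates
strictly, and the separating functional is `X ↦ Re Tr (W X)` on Hermitian matrices for a
Hermitian `W`. Since `Sep + PSD` is stable under adding positive semidefinite matrices, `W` is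
positive semidefinite; since `t⁻¹ J` is itself positive semidefinite, the separating level is
positive, so `W` can be rescaled to a witness with `Tr (W J) < t`.
-/

open Matrix BigOperators
open scoped ComplexOrder

/-- A quantum state: positive semidefinite matrix of trace 1. -/
def MatState {ι : Type*} [Fintype ι] (ρ : Matrix ι ι ℂ) : Prop :=
  ρ.PosSemidef ∧ ρ.trace = 1

/-- A separable state on a bipartite system `A ⊗ B`: a finite convex combination of
Kronecker products of states. -/
def SepState {A B : Type*} [Fintype A] [Fintype B]
    (σ : Matrix (A × B) (A × B) ℂ) : Prop :=
  ∃ (k : ℕ) (p : Fin k → ℝ) (ρ : Fin k → Matrix A A ℂ) (τ : Fin k → Matrix B B ℂ),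
    (∀ i, 0 ≤ p i) ∧ (∑ i, p i = 1) ∧ (∀ i, MatState (ρ i)) ∧ (∀ i, MatState (τ i)) ∧
    σ = ∑ i, (p i : ℂ) • Matrix.kroneckerMap (· * ·) (ρ i) (τ i)

/-- The weight-based measure of a bipartite state `J`:
`C_w(J) = inf { s ∈ [0,1] : ∃ separable state σ, J - (1-s)·σ ⪰ 0 }`. -/
noncomputable def Cw {A B : Type*} [Fintype A] [Fintype B]
    (J : Matrix (A × B) (A × B) ℂ) : ℝ :=
  sInf {s : ℝ | 0 ≤ s ∧ s ≤ 1 ∧ ∃ σ, SepState σ ∧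
    (J - (((1 - s : ℝ) : ℂ)) • σ).PosSemidef}

open scoped Pointwise

/-! ### Compactness of convex hulls -/

section Topology

/-- In finite dimension, Carathéodory's theorem writes the convex hull of `s` as the union, over
`k ≤ dim E + 1`, of the images of `stdSimplex × s ^ k` under `(w, z) ↦ ∑ i, w i • z i`. -/
lemma isCompact_convexHull_of_finiteDimensional {E : Type*} [AddCommGroup E] [Module ℝ E]
    [TopologicalSpace E] [IsTopologicalAddGroup E] [ContinuousSMul ℝ E] [FiniteDimensional ℝ E]
    {s : Set E} (hs : IsCompact s) : IsCompact (convexHull ℝ s) := by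
  have hK : ∀ k : ℕ, IsCompact ((fun q : (Fin k → ℝ) × (Fin k → E) => ∑ i, q.1 i • q.2 i) ''
      (stdSimplex ℝ (Fin k) ×ˢ Set.univ.pi fun _ => s)) := fun k =>
    ((isCompact_stdSimplex ℝ (Fin k)).prod (isCompact_univ_pi fun _ => hs)).image (by fun_prop)
  have h := (Set.finite_le_nat (Module.finrank ℝ E + 1)).isCompact_biUnion fun k _ => hK k
  convert h using 1
  apply Set.Subset.antisymm
  · intro x hx
    obtain ⟨ι, _, z, w, hz, hind, hw, hw1, rfl⟩ := eq_pos_convex_span_of_mem_convexHull hx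
    let e := Fintype.equivFin ι
    have hcard : Fintype.card ι ≤ Module.finrank ℝ E + 1 :=
      hind.card_le_finrank_succ.trans
        (Nat.add_le_add_right (Submodule.finrank_le _) 1)
    refine Set.mem_biUnion (x := Fintype.card ι) hcard
      ⟨(w ∘ e.symm, z ∘ e.symm), ⟨⟨fun i => (hw _).le, ?_⟩, fun i _ => hz ⟨_, rfl⟩⟩, ?_⟩
    · simpa using (e.symm.sum_comp w).trans hw1
    · exact e.symm.sum_comp fun i => w i • z i
  · intro x hx
    obtain ⟨k, -, ⟨w, z⟩, ⟨⟨hw0, hw1⟩, hz⟩, rfl⟩ := Set.mem_iUnion₂.1 hx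
    exact mem_convexHull_of_exists_fintype w z hw0 hw1 (fun i => hz i trivial) rfl

end Topology

/-! ### Positive semidefinite matrices and the trace pairing -/

section PosSemidef

variable {ι : Type*} [Fintype ι]

open scoped MatrixOrder in
lemma exists_eq_conjTranspose_mul_self {M : Matrix ι ι ℂ} (hM : M.PosSemidef) :
    ∃ B : Matrix ι ι ℂ, M = Bᴴ * B := by
  classical
  obtain ⟨X, hX, -, h⟩ := CFC.exists_sqrt_of_isSelfAdjoint_of_quasispectrumRestricts
    hM.isHermitian (QuasispectrumRestricts.nnreal_of_nonneg hM.nonneg)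
  have hX' : Xᴴ = X := hX
  exact ⟨X, by rw [hX', ← h]⟩

lemma re_trace_mul_nonneg {W P : Matrix ι ι ℂ} (hW : W.PosSemidef) (hP : P.PosSemidef) :
    0 ≤ ((W * P).trace).re := by
  obtain ⟨B, rfl⟩ := exists_eq_conjTranspose_mul_self hP
  rw [← Matrix.mul_assoc, Matrix.trace_mul_comm, ← Matrix.mul_assoc]
  exact (Complex.le_def.1 (hW.mul_mul_conjTranspose_same B).trace_nonneg).1

lemma posSemidef_ofReal_smul {κ : Type*} {M : Matrix κ κ ℂ} (hM : M.PosSemidef) {c : ℝ} (hc : 0 ≤ c) :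
    ((c : ℂ) • M).PosSemidef :=
  hM.smul (by exact_mod_cast hc)

lemma isClosed_setOf_posSemidef : IsClosed {M : Matrix ι ι ℂ | M.PosSemidef} := by
  simp only [Matrix.posSemidef_iff_dotProduct_mulVec, Set.ofPred_and, Set.ofPred_forall]
  refine IsClosed.inter ?_ (isClosed_iInter fun x => ?_)
  · exact isClosed_eq (by fun_prop) continuous_id
  · exact isClosed_le continuous_const (by fun_prop)

lemma convex_setOf_posSemidef {κ : Type*} : Convex ℝ {M : Matrix κ κ ℂ | M.PosSemidef} := by
  intro X hX Y hY a b ha hb _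
  exact (hX.smul ha).add (hY.smul hb)

/-- The trace of `Bᴴ * B` is the sum of the `‖B i j‖ ^ 2`, so the states are the image under
`B ↦ Bᴴ * B` of a closed subset of a product of unit discs. -/
lemma isCompact_setOf_matState : IsCompact {ρ : Matrix ι ι ℂ | MatState ρ} := by
  have hbox : IsCompact {B : Matrix ι ι ℂ | ∀ i j, B i j ∈ Metric.closedBall (0 : ℂ) 1} := by
    have := isCompact_univ_pi fun _ : ι => isCompact_univ_pi fun _ : ι =>
      isCompact_closedBall (0 : ℂ) 1
    have hset : {B : Matrix ι ι ℂ | ∀ i j, B i j ∈ Metric.closedBall (0 : ℂ) 1} =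
        Set.univ.pi fun _ : ι => Set.univ.pi fun _ : ι => Metric.closedBall (0 : ℂ) 1 :=
      Set.ext fun B => ⟨fun h i _ j _ => h i j, fun h i j => h i trivial j trivial⟩
    rw [hset]
    exact this
  have hclosed : IsClosed {B : Matrix ι ι ℂ | (Bᴴ * B).trace = 1} :=
    isClosed_eq (by fun_prop) continuous_const
  have hcont : Continuous fun B : Matrix ι ι ℂ => Bᴴ * B := by fun_prop
  convert (hbox.inter_right hclosed).image hcont using 1
  ext ρ
  constructor
  · rintro ⟨hρ, htr⟩
    obtain ⟨B, rfl⟩ := exists_eq_conjTranspose_mul_self hρ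
    refine ⟨B, ⟨fun i j => ?_, htr⟩, rfl⟩
    have hsum : ∑ j, ∑ i, ‖B i j‖ ^ 2 = 1 := by
      have h : ((∑ j, ∑ i, ‖B i j‖ ^ 2 : ℝ) : ℂ) = 1 := by
        rw [← htr]
        simp [Matrix.trace, Matrix.mul_apply, Complex.conj_mul']
      exact_mod_cast h
    have h1 : ‖B i j‖ ^ 2 ≤ 1 := by
      rw [← hsum]
      exact (Finset.single_le_sum (f := fun i => ‖B i j‖ ^ 2)
        (fun _ _ => sq_nonneg _) (Finset.mem_univ i)).trans
        (Finset.single_le_sum (f := fun j => ∑ i, ‖B i j‖ ^ 2)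
        (fun _ _ => Finset.sum_nonneg fun _ _ => sq_nonneg _) (Finset.mem_univ j))
    rw [mem_closedBall_zero_iff]
    exact (sq_le_one_iff₀ (norm_nonneg _)).1 h1
  · rintro ⟨B, ⟨-, htr⟩, rfl⟩
    exact ⟨Matrix.posSemidef_conjTranspose_mul_self B, htr⟩

lemma exists_matState [Nonempty ι] : ∃ ρ : Matrix ι ι ℂ, MatState ρ := by
  classical
  obtain ⟨i⟩ := ‹Nonempty ι›
  refine ⟨Matrix.vecMulVec (Pi.single i 1) (star (Pi.single i 1)),
    Matrix.posSemidef_vecMulVec_self_star _, ?_⟩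
  rw [Matrix.trace_vecMulVec]
  simp

/-- Every real-linear functional agrees, on Hermitian matrices, with the trace pairing against a
Hermitian matrix. -/
lemma exists_hermitian_repr (f : Matrix ι ι ℂ →ₗ[ℝ] ℝ) :
    ∃ W : Matrix ι ι ℂ, W.IsHermitian ∧
      ∀ X : Matrix ι ι ℂ, X.IsHermitian → ((W * X).trace).re = f X := by
  classical
  -- The matrix of the complexification `X ↦ f X - i f (i X)`, before Hermitian symmetrization.
  let V : Matrix ι ι ℂ := fun j i =>
    (f (Matrix.single i j 1) : ℂ) - Complex.I * (f (Matrix.single i j Complex.I) : ℂ)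
  have hV : ∀ X : Matrix ι ι ℂ, ((V * X).trace).re = f X := by
    intro X
    have hsingle : ∀ i j, f (Matrix.single i j (X i j)) = (V j i * X i j).re := by
      intro i j
      have h : Matrix.single i j (X i j) = (X i j).re • Matrix.single i j (1 : ℂ)
          + (X i j).im • Matrix.single i j Complex.I := by
        rw [Matrix.smul_single, Matrix.smul_single, ← Matrix.single_add]
        congr 1
        apply Complex.ext <;> simp
      rw [h, map_add, map_smul, map_smul]
      simp [V]
      ring
    conv_rhs => rw [Matrix.matrix_eq_sum_single X]
    simp only [map_sum, hsingle, Matrix.trace, Matrix.diag_apply, Matrix.mul_apply,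
      Complex.re_sum]
    exact Finset.sum_comm
  refine ⟨(2⁻¹ : ℝ) • (V + Vᴴ), ?_, fun X hX => ?_⟩
  · ext i j
    simp [add_comm]
  · have h : ((Vᴴ * X).trace).re = ((V * X).trace).re := by
      have h1 : Vᴴ * X = (X * V)ᴴ := by rw [Matrix.conjTranspose_mul, hX.eq]
      rw [h1, Matrix.trace_conjTranspose, Matrix.trace_mul_comm]
      simp
    rw [Matrix.smul_mul, Matrix.trace_smul, Complex.smul_re, Matrix.add_mul, Matrix.trace_add,
      Complex.add_re, h, hV, smul_eq_mul]
    ring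

/-- A Hermitian matrix pairing nonnegatively with all positive semidefinite matrices is positive
semidefinite: test it on rank-one matrices. -/
lemma posSemidef_of_pairing_nonneg {W : Matrix ι ι ℂ} (hW : W.IsHermitian)
    (h : ∀ P : Matrix ι ι ℂ, P.PosSemidef → 0 ≤ ((W * P).trace).re) : W.PosSemidef := by
  refine .of_dotProduct_mulVec_nonneg hW fun x => ?_
  have h1 := h _ (Matrix.posSemidef_vecMulVec_self_star x)
  rw [Matrix.mul_vecMulVec, Matrix.trace_vecMulVec, dotProduct_comm] at h1
  exact Complex.le_def.2 ⟨h1, (hW.im_star_dotProduct_mulVec_self x).symm⟩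

end PosSemidef

/-! ### Separable states and the separation argument -/

section Separable

variable {A B : Type*} [Fintype A] [Fintype B]

/-- The set of product states `ρ ⊗ τ`. -/
def productStates (A B : Type*) [Fintype A] [Fintype B] : Set (Matrix (A × B) (A × B) ℂ) :=
  (fun q : Matrix A A ℂ × Matrix B B ℂ => Matrix.kroneckerMap (· * ·) q.1 q.2) ''
    ({ρ | MatState ρ} ×ˢ {τ | MatState τ})

lemma setOf_sepState_eq_convexHull :
    {σ : Matrix (A × B) (A × B) ℂ | SepState σ} = convexHull ℝ (productStates A B) := by
  apply Set.Subset.antisymm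
  · rintro σ ⟨k, p, ρ, τ, hp0, hp1, hρ, hτ, rfl⟩
    exact mem_convexHull_of_exists_fintype p
      (fun i => Matrix.kroneckerMap (· * ·) (ρ i) (τ i)) hp0 hp1
      (fun i => ⟨(ρ i, τ i), ⟨hρ i, hτ i⟩, rfl⟩) (by simp only [Complex.coe_smul])
  · intro σ hσ
    obtain ⟨κ, _, w, z, hw0, hw1, hz, rfl⟩ := mem_convexHull_iff_exists_fintype.1 hσ
    choose q hq hqz using hz
    let e := Fintype.equivFin κ
    refine ⟨Fintype.card κ, w ∘ e.symm, fun i => (q (e.symm i)).1, fun i => (q (e.symm i)).2,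
      fun i => hw0 _, (e.symm.sum_comp w).trans hw1, fun i => (hq _).1, fun i => (hq _).2, ?_⟩
    rw [← e.symm.sum_comp]
    refine Finset.sum_congr rfl fun i _ => ?_
    rw [← hqz, Function.comp_apply, Complex.coe_smul]

lemma isCompact_setOf_sepState :
    IsCompact {σ : Matrix (A × B) (A × B) ℂ | SepState σ} := by
  rw [setOf_sepState_eq_convexHull]
  refine isCompact_convexHull_of_finiteDimensional
    ((isCompact_setOf_matState.prod isCompact_setOf_matState).image ?_)
  refine continuous_matrix fun i j => ?_
  simp only [Matrix.kroneckerMap_apply]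
  fun_prop

lemma exists_sepState [Nonempty A] [Nonempty B] :
    ∃ σ : Matrix (A × B) (A × B) ℂ, SepState σ := by
  obtain ⟨ρ, hρ⟩ := exists_matState (ι := A)
  obtain ⟨τ, hτ⟩ := exists_matState (ι := B)
  exact ⟨_, 1, fun _ => 1, fun _ => ρ, fun _ => τ, by simp, by simp, fun _ => hρ, fun _ => hτ, rfl⟩

lemma SepState.matState {σ : Matrix (A × B) (A × B) ℂ} (hσ : SepState σ) : MatState σ := by
  obtain ⟨k, p, ρ, τ, hp0, hp1, hρ, hτ, rfl⟩ := hσ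
  refine ⟨Matrix.posSemidef_sum _ fun i _ =>
    posSemidef_ofReal_smul ((hρ i).1.kronecker (hτ i).1) (hp0 i), ?_⟩
  have htr : ∀ i, (Matrix.kroneckerMap (· * ·) (ρ i) (τ i)).trace = 1 := fun i => by
    have h := Matrix.trace_kronecker (ρ i) (τ i)
    rwa [(hρ i).2, (hτ i).2, mul_one] at h
  simp only [Matrix.trace_sum, Matrix.trace_smul, htr, smul_eq_mul, mul_one]
  exact_mod_cast hp1

/-- Strong duality: if no separable `σ` satisfies `t σ ≤ J`, some witness `W` has
`Re Tr (W J) < t`. -/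
lemma exists_witness [Nonempty A] [Nonempty B] {J : Matrix (A × B) (A × B) ℂ} (hJ : J.PosSemidef)
    {t : ℝ} (ht : 0 < t) (hno : ∀ σ, SepState σ → ¬ (J - (t : ℂ) • σ).PosSemidef) :
    ∃ W : Matrix (A × B) (A × B) ℂ, W.PosSemidef ∧
      (∀ σ, SepState σ → 1 ≤ ((W * σ).trace).re) ∧ ((W * J).trace).re < t := by
  classical
  have : LocallyConvexSpace ℝ (Matrix (A × B) (A × B) ℂ) :=
    inferInstanceAs (LocallyConvexSpace ℝ (A × B → A × B → ℂ))
  have htC : (t : ℂ) ≠ 0 := by exact_mod_cast ht.ne'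
  have hclosed : IsClosed ({σ : Matrix (A × B) (A × B) ℂ | SepState σ} + {P | P.PosSemidef}) :=
    isClosed_setOf_posSemidef.add_left_of_isCompact isCompact_setOf_sepState
  have hconvex : Convex ℝ
      ({σ : Matrix (A × B) (A × B) ℂ | SepState σ} + {P | P.PosSemidef}) := by
    rw [setOf_sepState_eq_convexHull]
    exact (convex_convexHull ℝ _).add convex_setOf_posSemidef
  have hJt : (((t⁻¹ : ℝ) : ℂ) • J).PosSemidef := posSemidef_ofReal_smul hJ (inv_nonneg.2 ht.le)
  have hmem : ((t⁻¹ : ℝ) : ℂ) • J ∉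
      ({σ : Matrix (A × B) (A × B) ℂ | SepState σ} + {P | P.PosSemidef}) := by
    rintro ⟨σ, hσ, P, hP, hsum⟩
    replace hsum : σ + P = ((t⁻¹ : ℝ) : ℂ) • J := hsum
    apply hno σ hσ
    have h : J - (t : ℂ) • σ = (t : ℂ) • P := by
      have h1 : J = (t : ℂ) • (σ + P) := by
        rw [hsum, smul_smul]
        simp [htC]
      rw [h1, smul_add, add_sub_cancel_left]
    rw [h]
    exact posSemidef_ofReal_smul hP ht.le
  obtain ⟨f, u, hfu, hf⟩ := geometric_hahn_banach_point_closed hconvex hclosed hmem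
  obtain ⟨W, hWh, hW⟩ := exists_hermitian_repr f.toLinearMap
  replace hW : ∀ X : Matrix (A × B) (A × B) ℂ, X.IsHermitian → ((W * X).trace).re = f X := hW
  obtain ⟨σ₀, hσ₀⟩ := exists_sepState (A := A) (B := B)
  -- `f` is bounded below by `u` on the ray `σ₀ + c P`, `c ≥ 0`, which forces `f P ≥ 0`.
  have hfP : ∀ P : Matrix (A × B) (A × B) ℂ, P.PosSemidef → 0 ≤ f P := by
    intro P hP
    by_contra! hneg
    have h0 := hf _ ⟨σ₀, hσ₀, 0, Matrix.PosSemidef.zero, rfl⟩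
    simp only [add_zero] at h0
    have hc : 0 ≤ (f σ₀ - u) / (-f P) := div_nonneg (by linarith) (by linarith)
    have h1 := hf _ ⟨σ₀, hσ₀, ((f σ₀ - u) / (-f P)) • P, hP.smul hc, rfl⟩
    simp only [map_add, map_smul, smul_eq_mul] at h1
    have h2 : (f σ₀ - u) / (-f P) * f P = -(f σ₀ - u) := by
      rw [div_neg, neg_mul, div_mul_cancel₀ _ hneg.ne]
    linarith
  have hWpsd : W.PosSemidef := posSemidef_of_pairing_nonneg hWh fun P hP => by
    rw [hW P hP.isHermitian]
    exact hfP P hP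
  have hu : 0 < u := (hfP _ hJt).trans_lt hfu
  have hscale : ∀ X : Matrix (A × B) (A × B) ℂ, X.IsHermitian →
      (((((u⁻¹ : ℝ) : ℂ) • W) * X).trace).re = u⁻¹ * f X := by
    intro X hX
    rw [Complex.coe_smul, Matrix.smul_mul, Matrix.trace_smul, Complex.smul_re, hW X hX, smul_eq_mul]
  refine ⟨((u⁻¹ : ℝ) : ℂ) • W, posSemidef_ofReal_smul hWpsd (inv_nonneg.2 hu.le),
    fun σ hσ => ?_, ?_⟩
  · have h0 := hf _ ⟨σ, hσ, 0, Matrix.PosSemidef.zero, rfl⟩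
    simp only [add_zero] at h0
    rw [hscale σ hσ.matState.1.isHermitian, ← div_eq_inv_mul, one_le_div hu]
    exact h0.le
  · rw [hscale J hJ.isHermitian, ← div_eq_inv_mul, div_lt_iff₀ hu]
    rw [Complex.coe_smul, map_smul, smul_eq_mul, ← div_eq_inv_mul, div_lt_iff₀ ht] at hfu
    linarith

end Separable

/-- Dual (witness) characterization of the weight-based measure. -/
theorem weight_measure_dual {m n : ℕ} (hm : 1 ≤ m) (hn : 1 ≤ n)
    (J : Matrix (Fin m × Fin n) (Fin m × Fin n) ℂ) (hJ : MatState J) :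
    Cw J = sSup {r : ℝ | ∃ W : Matrix (Fin m × Fin n) (Fin m × Fin n) ℂ,
      W.PosSemidef ∧ (∀ σ, SepState σ → 1 ≤ ((W * σ).trace).re) ∧
      r = 1 - ((W * J).trace).re} := by
  have : Nonempty (Fin m) := ⟨⟨0, hm⟩⟩
  have : Nonempty (Fin n) := ⟨⟨0, hn⟩⟩
  obtain ⟨σ₀, hσ₀⟩ := exists_sepState (A := Fin m) (B := Fin n)
  have hbdd : BddBelow {s : ℝ | 0 ≤ s ∧ s ≤ 1 ∧ ∃ σ, SepState σ ∧
      (J - (((1 - s : ℝ) : ℂ)) • σ).PosSemidef} := ⟨0, fun s hs => hs.1⟩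
  have hne : {s : ℝ | 0 ≤ s ∧ s ≤ 1 ∧ ∃ σ, SepState σ ∧
      (J - (((1 - s : ℝ) : ℂ)) • σ).PosSemidef}.Nonempty :=
    ⟨1, zero_le_one, le_rfl, σ₀, hσ₀, by simpa using hJ.1⟩
  have hone : Cw J ≤ 1 :=
    csInf_le hbdd ⟨zero_le_one, le_rfl, σ₀, hσ₀, by simpa using hJ.1⟩
  symm
  apply csSup_eq_of_forall_le_of_forall_lt_exists_gt
  · refine ⟨_, 1, Matrix.PosSemidef.one, fun σ hσ => ?_, rfl⟩
    simp [hσ.matState.2]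
  · rintro _ ⟨W, hW, hWσ, rfl⟩
    refine le_csInf hne ?_
    rintro s ⟨-, hs1, σ, hσ, hP⟩
    have h := re_trace_mul_nonneg hW hP
    rw [Complex.coe_smul, Matrix.mul_sub, Matrix.mul_smul, Matrix.trace_sub, Matrix.trace_smul,
      Complex.sub_re, Complex.smul_re, smul_eq_mul] at h
    nlinarith [hWσ σ hσ]
  · intro w hw
    -- At the level `1 - w` no separable state fits below `J`: for `0 ≤ w` because `w < Cw J`,
    -- and for `w < 0` because the level exceeds the trace of `J`.
    obtain ⟨W, hW, hWσ, hlt⟩ := exists_witness (t := 1 - w) hJ.1 (by linarith) fun σ hσ hP => by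
      rcases le_or_gt 0 w with h0 | h0
      · exact absurd (csInf_le hbdd ⟨h0, by linarith, σ, hσ, hP⟩) (not_le.2 hw)
      · have h := (Complex.le_def.1 hP.trace_nonneg).1
        rw [Complex.coe_smul, Matrix.trace_sub, Matrix.trace_smul, hJ.2, hσ.matState.2] at h
        simp at h
        linarith
    exact ⟨_, ⟨W, hW, hWσ, rfl⟩, by linarith⟩
end

section
/- Weight–robustness inequality: let d ≥ 2, let J be a state on ℂ^d ⊗ ℂ^d, and define the robustness C_r(J) = inf { t ≥ 0 : there exists a state ω on ℂ^d ⊗ ℂ^d such that (1/(1+t))·(J + t·ω) is a separable state }. Then C_r(J) ≤ (d² − 1)·C_w(J); equivalently, C_w(J) ≥ C_r(J)/(d² − 1). -/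
/-!
If `s` is feasible for the weight of `J`, with separable part `σ`, the remainder
`E = J - (1 - s) σ` is positive semidefinite of trace `s`, so all its eigenvalues are at most `s`
and `s • 1 - E` is positive semidefinite (`posSemidef_trace_smul_one_sub`). Adding this noise to
`J` gives `(1 - s) σ + s • 1`, a nonnegative combination of `σ` and the maximally mixed state,
hence separable after normalisation (`SepState.mix_one`). The trace of the noise is
`t = (d² - 1) s`, so `t` is feasible for the robustness; take the infimum over `s`.
-/

open Matrix BigOperators
open scoped ComplexOrder

/-- The robustness of a bipartite state `J`:
`C_r(J) = inf { t ≥ 0 : ∃ state ω, (J + t·ω)/(1+t) is separable }`. -/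
noncomputable def Cr {A B : Type*} [Fintype A] [Fintype B]
    (J : Matrix (A × B) (A × B) ℂ) : ℝ :=
  sInf {t : ℝ | 0 ≤ t ∧ ∃ ω, MatState ω ∧
    SepState ((((1 + t)⁻¹ : ℝ) : ℂ) • (J + ((t : ℝ) : ℂ) • ω))}

/-- A positive semidefinite matrix is dominated by its trace, since each eigenvalue is at most the
sum of all of them. -/
lemma posSemidef_trace_smul_one_sub {ι : Type*} [Fintype ι] [DecidableEq ι] {E : Matrix ι ι ℂ}
    (hE : E.PosSemidef) : (E.trace • (1 : Matrix ι ι ℂ) - E).PosSemidef := by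
  have hH := hE.isHermitian
  have hdiag : (diagonal fun i => E.trace - (hH.eigenvalues i : ℂ)).PosSemidef := by
    rw [posSemidef_diagonal_iff]
    intro i
    rw [hH.trace_eq_sum_eigenvalues, sub_nonneg]
    simp only [Complex.coe_algebraMap]
    exact_mod_cast Finset.single_le_sum (fun j _ => hE.eigenvalues_nonneg j) (Finset.mem_univ i)
  have hspec := hH.spectral_theorem
  rw [Unitary.conjStarAlgAut_apply] at hspec
  have hUU : (hH.eigenvectorUnitary : Matrix ι ι ℂ) *
      star (hH.eigenvectorUnitary : Matrix ι ι ℂ) = 1 :=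
    Unitary.coe_mul_star_self _
  have key := hdiag.mul_mul_conjTranspose_same (hH.eigenvectorUnitary : Matrix ι ι ℂ)
  have hsub : (diagonal fun i => E.trace - (hH.eigenvalues i : ℂ)) =
      E.trace • (1 : Matrix ι ι ℂ) - diagonal (RCLike.ofReal ∘ hH.eigenvalues) := by
    rw [smul_one_eq_diagonal, diagonal_sub]
    rfl
  rw [hsub, mul_sub, sub_mul, ← star_eq_conjTranspose, ← hspec, mul_smul_comm, mul_one,
    smul_mul_assoc, hUU] at key
  exact key

lemma matState_maximallyMixed {d : ℕ} (hd : 0 < d) :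
    MatState (((d : ℂ)⁻¹) • (1 : Matrix (Fin d) (Fin d) ℂ)) := by
  refine ⟨PosSemidef.one.smul (by simp), ?_⟩
  have : (d : ℂ) ≠ 0 := by exact_mod_cast hd.ne'
  simp [trace_smul, this]

lemma kronecker_maximallyMixed {d : ℕ} :
    Matrix.kroneckerMap (· * ·) (((d : ℂ)⁻¹) • (1 : Matrix (Fin d) (Fin d) ℂ))
      (((d : ℂ)⁻¹) • (1 : Matrix (Fin d) (Fin d) ℂ)) = (((d : ℂ) ^ 2)⁻¹) • 1 := by
  ext ⟨i, j⟩ ⟨k, l⟩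
  by_cases h1 : i = k <;> by_cases h2 : j = l <;>
    simp [h1, h2, pow_two]

lemma sepState_maximallyMixed {d : ℕ} (hd : 0 < d) :
    SepState ((((d : ℂ) ^ 2)⁻¹) • (1 : Matrix (Fin d × Fin d) (Fin d × Fin d) ℂ)) :=
  ⟨1, fun _ => 1, fun _ => _, fun _ => _, fun _ => zero_le_one, by simp,
    fun _ => matState_maximallyMixed hd, fun _ => matState_maximallyMixed hd,
    by simp only [kronecker_maximallyMixed]; simp⟩

lemma SepState.trace_eq_one {A B : Type*} [Fintype A] [Fintype B]
    {σ : Matrix (A × B) (A × B) ℂ} (h : SepState σ) : σ.trace = 1 := by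
  obtain ⟨k, p, ρ, τ, _, hp1, hρ, hτ, rfl⟩ := h
  have : ∀ i, (kroneckerMap (· * ·) (ρ i) (τ i)).trace = 1 := fun i => by
    exact (trace_kronecker (ρ i) (τ i)).trans (by rw [(hρ i).2, (hτ i).2, mul_one])
  simp only [trace_sum, trace_smul, this]
  simpa using congrArg (fun x : ℝ => (x : ℂ)) hp1

/-- Separability survives mixing with the maximally mixed state `(d²)⁻¹ • 1`, whose weight here is
`q * d²`. -/
lemma SepState.mix_one {d : ℕ} (hd : 0 < d) {σ : Matrix (Fin d × Fin d) (Fin d × Fin d) ℂ}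
    (h : SepState σ) {c q : ℝ} (hc : 0 ≤ c) (hq : 0 ≤ q) (hcq : c + q * (d : ℝ) ^ 2 = 1) :
    SepState ((c : ℂ) • σ + (q : ℂ) • 1) := by
  obtain ⟨k, p, ρ, τ, hp, hp1, hρ, hτ, rfl⟩ := h
  refine ⟨k + 1, Fin.cons (q * (d : ℝ) ^ 2) (fun i => c * p i), Fin.cons _ ρ, Fin.cons _ τ,
    ?_, ?_, Fin.cases (matState_maximallyMixed hd) hρ,
    Fin.cases (matState_maximallyMixed hd) hτ, ?_⟩
  · exact Fin.cases (by simp only [Fin.cons_zero]; positivity)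
      (fun i => by simpa using mul_nonneg hc (hp i))
  · rw [Fin.sum_univ_succ]
    simp only [Fin.cons_zero, Fin.cons_succ, ← Finset.mul_sum, hp1]
    linarith
  · have hd' : (d : ℂ) ≠ 0 := by exact_mod_cast hd.ne'
    rw [Fin.sum_univ_succ]
    simp only [Fin.cons_zero, Fin.cons_succ, kronecker_maximallyMixed, smul_smul]
    rw [add_comm, Finset.smul_sum]
    congr 1
    · congr 1
      push_cast
      field_simp
    · simp only [smul_smul, Complex.ofReal_mul]

/-- Weight–robustness inequality `C_r(J) ≤ (d² − 1)·C_w(J)`. -/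
theorem robustness_le_weight {d : ℕ} (hd : 2 ≤ d)
    (J : Matrix (Fin d × Fin d) (Fin d × Fin d) ℂ) (hJ : MatState J) :
    Cr J ≤ ((d : ℝ) ^ 2 - 1) * Cw J := by
  have hd0 : 0 < d := by omega
  have hd2 : (2 : ℝ) ≤ d := by exact_mod_cast hd
  have hD : 0 < (d : ℝ) ^ 2 - 1 := by nlinarith
  rw [mul_comm, ← div_le_iff₀ hD]
  refine le_csInf ⟨1, zero_le_one, le_rfl, _, sepState_maximallyMixed hd0,
    by simpa using hJ.1⟩ ?_
  rintro s ⟨hs0, hs1, σ, hσ, hE⟩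
  rw [div_le_iff₀ hD]
  refine csInf_le ⟨0, fun t ht => ht.1⟩ ?_
  have htr : (J - ((1 - s : ℝ) : ℂ) • σ).trace = (s : ℂ) := by
    rw [trace_sub, trace_smul, hJ.2, hσ.trace_eq_one]
    simp
  -- At `s = 0` the noise has trace zero and cannot be normalised, but then `J = σ`.
  rcases hs0.eq_or_lt with rfl | hs
  · have hJσ : J - ((1 - 0 : ℝ) : ℂ) • σ = 0 := hE.trace_eq_zero_iff.mp (by simpa using htr)
    have : J = σ := by simpa [sub_eq_zero] using hJσ
    refine ⟨by simp, J, hJ, ?_⟩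
    simpa [this] using hσ
  · have hN := posSemidef_trace_smul_one_sub hE
    rw [htr] at hN
    set t : ℝ := s * ((d : ℝ) ^ 2 - 1) with ht
    have ht0 : 0 < t := mul_pos hs hD
    have ht0' : (t : ℂ) ≠ 0 := by exact_mod_cast ht0.ne'
    refine ⟨ht0.le, ((t : ℂ)⁻¹) • ((s : ℂ) • 1 - (J - ((1 - s : ℝ) : ℂ) • σ)), ⟨?_, ?_⟩, ?_⟩
    · exact hN.smul (by exact_mod_cast (inv_pos.mpr ht0).le)
    · have : (s : ℂ) * ((d : ℂ) * d) - s = t := by rw [ht]; push_cast; ring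
      rw [trace_smul, trace_sub, htr]
      simp [this, ht0']
    · rw [smul_smul, mul_inv_cancel₀ ht0', one_smul]
      have h1t : (1 + t) ≠ 0 := by positivity
      have := hσ.mix_one hd0 (c := (1 + t)⁻¹ * (1 - s)) (q := (1 + t)⁻¹ * s)
        (mul_nonneg (by positivity) (by linarith)) (by positivity)
        (by rw [mul_assoc, ← mul_add, inv_mul_eq_one₀ h1t, ht]; ring)
      convert this using 1
      rw [Complex.ofReal_mul, Complex.ofReal_mul, ← smul_smul, ← smul_smul, ← smul_add]
      congr 1
      abel
end
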